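/- Assume θ ≥ 0, b ≥ 0 and c ≤ 0 on Ω. Let g be a fixed boundary datum, and for each integer n ≥ 1 let Ψ_n ∈ C²(Ω) ∩ C¹(cl(Ω)) with Ψ_n > 0 on cl(Ω) satisfy the regularized equation -∇·(a∇Ψ_n) + bΨ_n = -c(Ψ_n + 1/n)^{-θ} pointwise in Ω with Ψ_n = g on ∂Ω. Then for all integers n > m ≥ 1 one has Ψ_n ≥ Ψ_m and Ψ_n + 1/n ≤ Ψ_m + 1/m everywhere in Ω. -/

import Mathlib

/-!
Both inequalities are comparison statements for one linear operator. Put `w = Ψ m - Ψ n` and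
`v = Ψ n - Ψ m`. Because `t ↦ t ^ (-θ)` is nonincreasing on `(0, ∞)`, subtracting the two equations
gives `∇·(a∇w) ≥ b w ≥ 0` wherever `w > 0`, and `∇·(a∇v) ≥ b v ≥ 0` wherever `v > 1/m - 1/n`. As
`w = v = 0` on the boundary, a weak maximum principle (`weak_max_principle`) gives `w ≤ 0` and
`v ≤ 1/m - 1/n`.

The maximum principle holds since `∇·(a∇f) ≤ 0` at an interior local maximum of `f`
(`divA_nonpos_of_isLocalMax`), while adding a small multiple of the barrier `exp (γ x₀)` with `γ`
large makes `∇·(a∇·)` strictly positive (`divA_exp`).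
-/

open Real Set MeasureTheory Filter Topology

/-- Divergence-form operator `∇·(a∇u)(x) = ∑ i ∂_i (a ∂_i u)(x)`. -/
noncomputable def divA {d : ℕ} (a u : EuclideanSpace ℝ (Fin d) → ℝ)
    (x : EuclideanSpace ℝ (Fin d)) : ℝ :=
  ∑ i : Fin d,
    fderiv ℝ (fun y => a y * fderiv ℝ u y (EuclideanSpace.single i (1 : ℝ))) x
      (EuclideanSpace.single i (1 : ℝ))

/-- Squared Euclidean norm of the gradient `|∇u|²(x)`. -/
noncomputable def gradSq {d : ℕ} (u : EuclideanSpace ℝ (Fin d) → ℝ)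
    (x : EuclideanSpace ℝ (Fin d)) : ℝ :=
  ∑ i : Fin d, (fderiv ℝ u x (EuclideanSpace.single i (1 : ℝ))) ^ 2



/-- If `A φ'` vanishes at `0` and has positive derivative there, with `A > 0` near `0`, then `φ` is
strictly increasing on a right neighbourhood of `0`, so `0` is not a local maximum of `φ`. -/
lemma not_isLocalMax_of_flux_deriv_pos {φ A : ℝ → ℝ} {D : ℝ}
    (hφ : ∀ᶠ t in 𝓝 (0 : ℝ), DifferentiableAt ℝ φ t)
    (hA : ∀ᶠ t in 𝓝 (0 : ℝ), 0 < A t)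
    (hG : HasDerivAt (fun t => A t * deriv φ t) D 0) (hD : 0 < D) :
    ¬ IsLocalMax φ 0 := by
  intro hmax
  have h0 : deriv φ 0 = 0 := hmax.deriv_eq_zero
  have hs := hasDerivAt_iff_tendsto_slope.1 hG
  have hpos := hs.eventually (lt_mem_nhds hD)
  rw [eventually_nhdsWithin_iff] at hpos
  obtain ⟨δ, hδ, hball⟩ := Metric.eventually_nhds_iff.1
    (hpos.and (hφ.and (hA.and hmax)))
  have hmem : ∀ t ∈ Icc (0 : ℝ) (δ / 2), dist t 0 < δ := by
    intro t ht
    rw [Real.dist_eq, sub_zero, abs_of_nonneg ht.1]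
    linarith [ht.2]
  have hmono : StrictMonoOn φ (Icc 0 (δ / 2)) := by
    apply strictMonoOn_of_deriv_pos (convex_Icc _ _)
    · intro t ht
      exact (hball (hmem t ht)).2.1.continuousAt.continuousWithinAt
    · intro t ht
      rw [interior_Icc] at ht
      obtain ⟨h1, -, h3, -⟩ := hball (hmem t ⟨ht.1.le, ht.2.le⟩)
      have h4 := h1 (by simpa using ht.1.ne')
      rw [slope_def_field, h0, mul_zero, sub_zero, sub_zero] at h4
      have h5 : 0 < A t * deriv φ t := by
        have := mul_pos h4 ht.1
        rwa [div_mul_cancel₀ _ ht.1.ne'] at this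
      exact (pos_iff_pos_of_mul_pos h5).1 h3
  have hlt := hmono (left_mem_Icc.2 (by linarith)) (right_mem_Icc.2 (by linarith))
    (by linarith : (0 : ℝ) < δ / 2)
  exact absurd (hball (hmem (δ / 2) ⟨by linarith, le_rfl⟩)).2.2.2 (not_le.2 hlt)

lemma differentiableAt_partial {d : ℕ} {u : EuclideanSpace ℝ (Fin d) → ℝ}
    {x : EuclideanSpace ℝ (Fin d)} (hu : ContDiffAt ℝ 2 u x) (e : EuclideanSpace ℝ (Fin d)) :
    DifferentiableAt ℝ (fun y => fderiv ℝ u y e) x :=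
  ((hu.fderiv_right (m := 1) (by norm_num)).differentiableAt (by norm_num)).clm_apply
    (differentiableAt_const e)

lemma eventually_differentiableAt {d : ℕ} {u : EuclideanSpace ℝ (Fin d) → ℝ}
    {x : EuclideanSpace ℝ (Fin d)} (hu : ContDiffAt ℝ 2 u x) :
    ∀ᶠ y in 𝓝 x, DifferentiableAt ℝ u y :=
  (hu.eventually (by norm_num)).mono fun _ hy => hy.differentiableAt (by norm_num)

lemma divA_add_smul {d : ℕ} {a u v : EuclideanSpace ℝ (Fin d) → ℝ}
    {x : EuclideanSpace ℝ (Fin d)} (ha : DifferentiableAt ℝ a x)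
    (hu : ContDiffAt ℝ 2 u x) (hv : ContDiffAt ℝ 2 v x) (s : ℝ) :
    divA a (fun y => u y + s * v y) x = divA a u x + s * divA a v x := by
  unfold divA
  rw [Finset.mul_sum, ← Finset.sum_add_distrib]
  refine Finset.sum_congr rfl fun i _ => ?_
  set e := EuclideanSpace.single i (1 : ℝ)
  have hev : (fun y => a y * fderiv ℝ (fun y => u y + s * v y) y e) =ᶠ[𝓝 x]
      fun y => a y * fderiv ℝ u y e + s * (a y * fderiv ℝ v y e) := by
    filter_upwards [eventually_differentiableAt hu, eventually_differentiableAt hv] with y h1 h2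
    have h3 : fderiv ℝ (fun y => u y + s * v y) y = _ :=
      (h1.hasFDerivAt.add (h2.hasFDerivAt.const_mul s)).fderiv
    rw [h3]
    simp
    ring
  rw [hev.fderiv_eq]
  have h1 := (ha.mul (differentiableAt_partial hu e)).hasFDerivAt
  have h2 := (ha.mul (differentiableAt_partial hv e)).hasFDerivAt
  have h3 := (h1.add (h2.const_mul s)).fderiv
  exact (congrArg (fun L => L e) h3).trans (by simp; rfl)

lemma divA_nonpos_of_isLocalMax {d : ℕ} {a f : EuclideanSpace ℝ (Fin d) → ℝ}
    {x : EuclideanSpace ℝ (Fin d)} (ha : DifferentiableAt ℝ a x) (hpos : ∀ᶠ y in 𝓝 x, 0 < a y)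
    (hf : ContDiffAt ℝ 2 f x) (hmax : IsLocalMax f x) : divA a f x ≤ 0 := by
  by_contra! hcon
  obtain ⟨i, -, hi⟩ := Finset.exists_lt_of_sum_lt (s := Finset.univ) (f := fun _ : Fin d => (0 : ℝ))
    (by simpa [divA] using hcon)
  set e := EuclideanSpace.single i (1 : ℝ)
  -- Restrict to the line through `x` in direction `e`.
  have hline : ∀ t : ℝ, HasDerivAt (fun t : ℝ => x + t • e) e t := fun t => by
    simpa using ((hasDerivAt_id t).smul_const e).const_add x
  have hl0 : x + (0 : ℝ) • e = x := by simp
  have htend : Tendsto (fun t : ℝ => x + t • e) (𝓝 0) (𝓝 x) := by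
    simpa using (hline 0).continuousAt.tendsto
  have hfd := htend.eventually (eventually_differentiableAt hf)
  have hder : ∀ᶠ t in 𝓝 (0 : ℝ), HasDerivAt (fun t : ℝ => f (x + t • e))
      (fderiv ℝ f (x + t • e) e) t := hfd.mono fun t ht =>
    ht.hasFDerivAt.comp_hasDerivAt t (hline t)
  refine not_isLocalMax_of_flux_deriv_pos (φ := fun t : ℝ => f (x + t • e))
    (A := fun t : ℝ => a (x + t • e)) (hder.mono fun t ht => ht.differentiableAt)
    (htend.eventually hpos) ?_ hi ?_
  · have h1 := (ha.mul (differentiableAt_partial hf e)).hasFDerivAt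
    have h2 := HasFDerivAt.comp_hasDerivAt_of_eq (0 : ℝ) h1 (hline 0) hl0.symm
    refine h2.congr_of_eventuallyEq ?_
    filter_upwards [hder] with t ht
    simp [ht.deriv]
  · have := htend.eventually hmax
    simpa [IsLocalMax, IsMaxFilter] using this

lemma divA_exp {d : ℕ} {a : EuclideanSpace ℝ (Fin d) → ℝ}
    {x : EuclideanSpace ℝ (Fin d)} (ha : DifferentiableAt ℝ a x) (j : Fin d) (γ : ℝ) :
    divA a (fun y => Real.exp (γ * y j)) x =
      γ * Real.exp (γ * x j) * (γ * a x + fderiv ℝ a x (EuclideanSpace.single j (1 : ℝ))) := by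
  have hh : ∀ y : EuclideanSpace ℝ (Fin d), HasFDerivAt
      (fun y : EuclideanSpace ℝ (Fin d) => Real.exp (γ * y j))
      (Real.exp (γ * y j) • (γ • (EuclideanSpace.proj j : EuclideanSpace ℝ (Fin d) →L[ℝ] ℝ))) y :=
    fun y => (((EuclideanSpace.proj j : EuclideanSpace ℝ (Fin d) →L[ℝ] ℝ).hasFDerivAt
      (x := y)).const_mul γ).exp
  unfold divA
  rw [Finset.sum_eq_single j]
  · have h1 : (fun y => a y * fderiv ℝ (fun y : EuclideanSpace ℝ (Fin d) => Real.exp (γ * y j)) y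
        (EuclideanSpace.single j (1 : ℝ))) = fun y => a y * (γ * Real.exp (γ * y j)) := by
      funext y
      rw [(hh y).fderiv]
      simp [mul_comm]
    have h2 : fderiv ℝ (fun y => a y * (γ * Real.exp (γ * y j))) x = _ :=
      (ha.hasFDerivAt.mul ((hh x).const_mul γ)).fderiv
    rw [h1, h2]
    simp
    ring
  · intro i _ hij
    have h1 : (fun y => a y * fderiv ℝ (fun y : EuclideanSpace ℝ (Fin d) => Real.exp (γ * y j)) y
        (EuclideanSpace.single i (1 : ℝ))) = fun y => 0 := by
      funext y
      rw [(hh y).fderiv]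
      simp [hij.symm]
    rw [h1]
    simp
  · simp

/-- Weak maximum principle: a function that is at most `K` on the boundary and has
`∇·(a∇w) ≥ 0` wherever it exceeds `K` is at most `K` in all of `Ω`. -/
lemma weak_max_principle {d : ℕ} (hd : 1 ≤ d) {Ω U : Set (EuclideanSpace ℝ (Fin d))}
    (hΩo : IsOpen Ω) (hΩb : Bornology.IsBounded Ω)
    (hU : IsOpen U) (hUΩ : closure Ω ⊆ U)
    {a w : EuclideanSpace ℝ (Fin d) → ℝ}
    (ha : ContDiffOn ℝ 1 a U) {a₀ : ℝ} (ha₀ : 0 < a₀) (halb : ∀ x ∈ Ω, a₀ ≤ a x)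
    (hw2 : ContDiffOn ℝ 2 w Ω) (hwc : ContinuousOn w (closure Ω)) {K : ℝ}
    (hbd : ∀ x ∈ frontier Ω, w x ≤ K)
    (hdiv : ∀ x ∈ Ω, K < w x → 0 ≤ divA a w x) :
    ∀ x ∈ Ω, w x ≤ K := by
  intro x₀ hx₀
  by_contra! hx₀K
  have hcomp : IsCompact (closure Ω) := hΩb.isCompact_closure
  let j : Fin d := ⟨0, hd⟩
  set e := EuclideanSpace.single j (1 : ℝ)
  have hda : ContinuousOn (fun y => fderiv ℝ a y e) (closure Ω) :=
    ((ha.continuousOn_fderiv_of_isOpen hU le_rfl).clm_apply continuousOn_const).mono hUΩ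
  obtain ⟨B, hB⟩ := hcomp.exists_bound_of_continuousOn hda
  have hB0 : 0 ≤ B := (norm_nonneg _).trans (hB x₀ (subset_closure hx₀))
  -- This choice of `γ` gives `γ a + ∂ⱼ a ≥ (B + 1) - B > 0` on `Ω`.
  set γ := (B + 1) / a₀ with hγ
  have hγ0 : 0 < γ := by positivity
  set h : EuclideanSpace ℝ (Fin d) → ℝ := fun y => Real.exp (γ * y j) with hh
  have hhs : ContDiff ℝ 2 h :=
    (contDiff_const.mul (EuclideanSpace.proj j : EuclideanSpace ℝ (Fin d) →L[ℝ] ℝ).contDiff).exp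
  obtain ⟨H, hH⟩ := hcomp.exists_bound_of_continuousOn hhs.continuous.continuousOn
  have hhpos : ∀ y, 0 < h y := fun y => Real.exp_pos _
  have hH' : ∀ y ∈ closure Ω, h y ≤ H := fun y hy => (le_abs_self _).trans (hH y hy)
  have hH0 : 0 < H := (hhpos x₀).trans_le (hH' x₀ (subset_closure hx₀))
  -- The perturbation `ε h` stays below half of the excess `w x₀ - K`.
  set ε := (w x₀ - K) / (2 * H) with hε
  have hε0 : 0 < ε := div_pos (by linarith) (by linarith)
  have hεH : ε * H = (w x₀ - K) / 2 := by
    rw [hε]; field_simp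
  obtain ⟨y, hyc, hymax⟩ := hcomp.exists_isMaxOn ⟨x₀, subset_closure hx₀⟩
    (f := fun y => w y + ε * h y) (hwc.add (continuousOn_const.mul hhs.continuous.continuousOn))
  have hwy : K < w y := by
    have h1 : w x₀ + ε * h x₀ ≤ w y + ε * h y := hymax (subset_closure hx₀)
    have h2 := mul_pos hε0 (hhpos x₀)
    have h3 := mul_le_mul_of_nonneg_left (hH' y hyc) hε0.le
    linarith
  have hy : y ∈ Ω := by
    by_contra hyn
    have : y ∈ frontier Ω := by
      rw [hΩo.frontier_eq]; exact ⟨hyc, hyn⟩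
    linarith [hbd y this]
  have hΩy : Ω ∈ 𝓝 y := hΩo.mem_nhds hy
  have had : DifferentiableAt ℝ a y :=
    (ha.contDiffAt (hU.mem_nhds (hUΩ hyc))).differentiableAt (by norm_num)
  have hw2y : ContDiffAt ℝ 2 w y := hw2.contDiffAt hΩy
  have hle := divA_nonpos_of_isLocalMax had
    (Filter.mem_of_superset hΩy fun z hz => ha₀.trans_le (halb z hz))
    (hw2y.add (contDiffAt_const.mul hhs.contDiffAt))
    (hymax.isLocalMax (Filter.mem_of_superset hΩy subset_closure))
  rw [divA_add_smul had hw2y hhs.contDiffAt, divA_exp had j γ] at hle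
  have h1 := hdiv y hy hwy
  have h2 : 0 < γ * a y + fderiv ℝ a y e := by
    have h3 : B + 1 ≤ γ * a y := by
      have := mul_le_mul_of_nonneg_left (halb y hy) hγ0.le
      rwa [hγ, div_mul_cancel₀ _ ha₀.ne'] at this
    have h4 := (abs_le.1 (hB y hyc)).1
    linarith
  have h5 := mul_pos hε0 (mul_pos (mul_pos hγ0 (hhpos y)) h2)
  linarith

theorem stmt8 {d : ℕ} (hd : 1 ≤ d) (Ω U : Set (EuclideanSpace ℝ (Fin d)))
    (hΩo : IsOpen Ω) (hΩb : Bornology.IsBounded Ω)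
    (hU : IsOpen U) (hUΩ : closure Ω ⊆ U)
    (a b c : EuclideanSpace ℝ (Fin d) → ℝ)
    (ha : ContDiffOn ℝ 1 a U) (a₀ : ℝ) (ha₀ : 0 < a₀) (halb : ∀ x ∈ Ω, a₀ ≤ a x)
    (hbcont : ContinuousOn b (closure Ω)) (hccont : ContinuousOn c (closure Ω))
    (θ : ℝ) (hθ : 0 ≤ θ)
    (hbnn : ∀ x ∈ Ω, 0 ≤ b x) (hcnp : ∀ x ∈ Ω, c x ≤ 0)
    (g : EuclideanSpace ℝ (Fin d) → ℝ)
    (Ψ : ℕ → EuclideanSpace ℝ (Fin d) → ℝ)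
    (hΨ2 : ∀ n : ℕ, 1 ≤ n → ContDiffOn ℝ 2 (Ψ n) Ω)
    (hΨ1 : ∀ n : ℕ, 1 ≤ n → ContDiffOn ℝ 1 (Ψ n) (closure Ω))
    (hΨpos : ∀ n : ℕ, 1 ≤ n → ∀ x ∈ closure Ω, 0 < Ψ n x)
    (hΨeq : ∀ n : ℕ, 1 ≤ n → ∀ x ∈ Ω,
      -divA a (Ψ n) x + b x * Ψ n x = -c x * (Ψ n x + 1 / (n : ℝ)) ^ (-θ))
    (hΨbd : ∀ n : ℕ, 1 ≤ n → ∀ x ∈ frontier Ω, Ψ n x = g x) :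
    ∀ n m : ℕ, 1 ≤ m → m < n → ∀ x ∈ Ω,
      Ψ m x ≤ Ψ n x ∧ Ψ n x + 1 / (n : ℝ) ≤ Ψ m x + 1 / (m : ℝ) := by

  intro n m hm hmn
  have hn : 1 ≤ n := hm.trans hmn.le
  have hm0 : (0 : ℝ) < m := by exact_mod_cast hm
  have hinv : 1 / (n : ℝ) ≤ 1 / (m : ℝ) :=
    one_div_le_one_div_of_le hm0 (by exact_mod_cast hmn.le)
  have hdiff : ∀ p q : ℕ, 1 ≤ p → 1 ≤ q → ∀ x ∈ Ω,
      divA a (fun y => Ψ p y + (-1) * Ψ q y) x = divA a (Ψ p) x + (-1) * divA a (Ψ q) x :=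
    fun p q hp hq x hx => divA_add_smul
      ((ha.contDiffAt (hU.mem_nhds (hUΩ (subset_closure hx)))).differentiableAt (by norm_num))
      ((hΨ2 p hp).contDiffAt (hΩo.mem_nhds hx)) ((hΨ2 q hq).contDiffAt (hΩo.mem_nhds hx)) _
  -- Where `Ψ p` exceeds `Ψ q` by more than `K`, the bound on `K` gives `Ψ q + 1/q ≤ Ψ p + 1/p`, so
  -- the right-hand side of the equation for `p` is the smaller one.
  have key : ∀ p q : ℕ, 1 ≤ p → 1 ≤ q → ∀ K : ℝ, 0 ≤ K → 1 / (q : ℝ) - 1 / (p : ℝ) ≤ K →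
      ∀ x ∈ Ω, Ψ p x + (-1) * Ψ q x ≤ K := by
    intro p q hp hq K hK hKpq
    refine weak_max_principle hd hΩo hΩb hU hUΩ ha ha₀ halb
      ((hΨ2 p hp).add (contDiffOn_const.mul (hΨ2 q hq)))
      ((hΨ1 p hp).continuousOn.add (continuousOn_const.mul (hΨ1 q hq).continuousOn)) ?_ ?_
    · intro x hx
      rw [hΨbd p hp x hx, hΨbd q hq x hx]
      linarith
    · intro x hx hKx
      rw [hdiff p q hp hq x hx]
      have hq0 : 0 < Ψ q x + 1 / (q : ℝ) :=
        add_pos_of_pos_of_nonneg (hΨpos q hq x (subset_closure hx)) (by positivity)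
      have hpow : (Ψ p x + 1 / (p : ℝ)) ^ (-θ) ≤ (Ψ q x + 1 / (q : ℝ)) ^ (-θ) :=
        Real.rpow_le_rpow_of_nonpos hq0 (by linarith) (by linarith)
      have h1 := mul_le_mul_of_nonneg_left hpow (neg_nonneg.2 (hcnp x hx))
      have h2 : b x * Ψ q x ≤ b x * Ψ p x :=
        mul_le_mul_of_nonneg_left (by linarith) (hbnn x hx)
      linarith [hΨeq p hp x hx, hΨeq q hq x hx]
  intro x hx
  constructor
  · linarith [key m n hm hn 0 le_rfl (by linarith) x hx]
  · linarith [key n m hn hm (1 / (m : ℝ) - 1 / (n : ℝ)) (by linarith) le_rfl x hx]
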